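/- (Lemma 1) Let A : ℝ³ → ℝ be smooth and everywhere positive, and let H be a smooth function of the lattice variables u_p,…,u_q (p ≥ q) that is not identically zero. Suppose that for all real sequences (u_j) the identity A(u_4,u_3,u_2)·H(u_p,…,u_q) = A(u_1,u_0,u_{−1})·H(u_{p+2},…,u_{q+2}) holds (i.e. a_3 h_0 = a_0 h_2, where a_n = A(u_{n+1},u_n,u_{n−1}) and h_n is the n-th shift of H). Then there exists a function α : ℝ² → ℝ such that A(x,y,z) = α(x,y)·α(y,z) for all real x, y, z. -/

import Mathlib

/-!
Gluing a configuration where `H ≠ 0` to a far translate of an arbitrary one shows that the nonvanishing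
of `H` propagates along the lattice, so `H` vanishes nowhere. With `f = log A` and `g = log |H|` the
identity becomes `g ∘ T² - g = f₃ - f₀`, which telescopes to
`g ∘ T²ᴺ - g = ∑_{k < N} (f_{2k+3} - f_{2k})`. For `N` large, a variable `u_m` with `m` strictly
between the two windows of `g` does not occur on the left, while on the right it occurs only in
`f_{m-1}, f_m, f_{m+1}`, with alternating signs. Hence `f(a,b,y) - f(b,y,c) + f(y,c,d)` does not
depend on `y` (`middle_indep`), and this functional equation alone forces
`f(x,y,z) = β(x,y) + β(y,z)` (`additive_split`). Then `α = exp β`.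
-/

open Finset

noncomputable section

/-- The shift operator: `(shift s u) j = u (j + s)`, so that for a lattice
function `F`, `(T^s F) u = F (shift s u)`. -/
def shift (s : ℤ) (u : ℤ → ℝ) : ℤ → ℝ := fun j => u (j + s)

/-- Partial derivative of a lattice function `φ` with respect to the lattice
variable `u_k`, evaluated at the sequence `u`. -/
def pd (φ : (ℤ → ℝ) → ℝ) (k : ℤ) (u : ℤ → ℝ) : ℝ :=
  deriv (fun x => φ (Function.update u k x)) (u k)

/-- `φ` is a smooth function of the lattice variables `u_p, …, u_q` (q ≤ p):
it factors through a smooth function of the `p - q + 1` variables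
`u_q, u_{q+1}, …, u_p`. -/
def SmoothWindow (q p : ℤ) (φ : (ℤ → ℝ) → ℝ) : Prop :=
  ∃ Φ : (Fin ((p - q).toNat + 1) → ℝ) → ℝ, ContDiff ℝ (⊤ : ℕ∞) Φ ∧
    ∀ u : ℤ → ℝ, φ u = Φ (fun i => u (q + (i.val : ℤ)))

/-- The discrete functional equation behind the factorization. Differencing it in `a` splits
`f(x,y,z) = φ(x,y) + ψ(y,z)`; the equation for `D = ψ - φ` then says that `D(b,y) - D(y,c)` is
independent of `y`, so `D` is a symmetric sum `κ(b) + κ(y) + c`, which is absorbed into `φ`. -/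
theorem additive_split (f : ℝ → ℝ → ℝ → ℝ)
    (K : ∀ a b y c d, f a b y - f b y c + f y c d = f a b 0 - f b 0 c + f 0 c d) (x y z : ℝ) :
    f x y z = (f x y 0 + f 0 0 y - f 0 y 0 - f 0 0 0 / 2)
      + (f y z 0 + f 0 0 z - f 0 z 0 - f 0 0 0 / 2) := by
  linarith [K x y z 0 0, K 0 y z 0 0, K 0 0 z 0 0, K 0 0 y 0 0]

/-- Only the dependence on finitely many variables is extracted from `SmoothWindow`. -/
theorem SmoothWindow.congr {q p : ℤ} {H : (ℤ → ℝ) → ℝ} (hH : SmoothWindow q p H)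
    (hpq : q ≤ p) {u v : ℤ → ℝ} (h : ∀ j, q ≤ j → j ≤ p → u j = v j) : H u = H v := by
  obtain ⟨Φ, -, hΦ⟩ := hH
  rw [hΦ, hΦ]
  congr 1
  funext i
  exact h _ (by omega) (by omega)

theorem shift_zero (u : ℤ → ℝ) : shift 0 u = u := by
  funext j
  simp [shift]

theorem shift_two_shift (k : ℕ) (u : ℤ → ℝ) :
    shift 2 (shift (2 * k) u) = shift (2 * ((k + 1 : ℕ) : ℤ)) u := by
  funext j
  simp only [shift]
  congr 1
  push_cast
  ring

theorem H_ne_zero {A : ℝ → ℝ → ℝ → ℝ} (hApos : ∀ x y z : ℝ, 0 < A x y z) {p q : ℤ}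
    (hpq : q ≤ p) {H : (ℤ → ℝ) → ℝ} (hH : SmoothWindow q p H) (hHne : ∃ u : ℤ → ℝ, H u ≠ 0)
    (hid : ∀ u : ℤ → ℝ,
      A (u 4) (u 3) (u 2) * H u = A (u 1) (u 0) (u (-1)) * H (shift 2 u)) (v : ℤ → ℝ) :
    H v ≠ 0 := by
  obtain ⟨u, hu⟩ := hHne
  have step : ∀ w, H w ≠ 0 → H (shift 2 w) ≠ 0 := fun w hw h0 => by
    have := hid w
    rw [h0, mul_zero] at this
    exact mul_ne_zero (hApos _ _ _).ne' hw this
  have iter : ∀ (k : ℕ) w, H w ≠ 0 → H (shift (2 * k) w) ≠ 0 := fun k w hw => by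
    induction k with
    | zero => simpa [shift_zero] using hw
    | succ k ih => rw [← shift_two_shift]; exact step _ ih
  -- For this `N` the windows `[q, p]` and `[q + 2N, p + 2N]` are disjoint.
  set N : ℕ := p.natAbs + q.natAbs + 1 with hN
  have key := iter N (fun j => if j ≤ p then u j else v (j - 2 * N)) (by
    rw [hH.congr hpq (v := u) (fun j _ hj => by simp [hj])]
    exact hu)
  rwa [hH.congr hpq (v := v) (fun j hj _ => by
    have : ¬ (j + 2 * (N : ℤ) ≤ p) := by omega
    simp only [shift, this, if_false]
    congr 1
    ring)] at key

/-- The relation `g ∘ T² - g = f₃ - f₀`, summed along the even shifts. -/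
theorem telescope {f : ℝ → ℝ → ℝ → ℝ} {g : (ℤ → ℝ) → ℝ}
    (h : ∀ u : ℤ → ℝ, g (shift 2 u) - g u = f (u 4) (u 3) (u 2) - f (u 1) (u 0) (u (-1)))
    (u : ℤ → ℝ) (N : ℕ) :
    g (shift (2 * N) u) - g u = ∑ k ∈ range N,
      (f (u (2 * k + 4)) (u (2 * k + 3)) (u (2 * k + 2))
        - f (u (2 * k + 1)) (u (2 * k)) (u (2 * k - 1))) := by
  induction N with
  | zero => simp [shift_zero]
  | succ k ih =>
    have hk := h (shift (2 * k) u)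
    rw [shift_two_shift] at hk
    rw [sum_range_succ, ← ih]
    simp only [shift] at hk ⊢
    ring_nf at hk ⊢
    linarith

/-- Changing one variable far from both windows of `g` leaves the left side of `telescope`
unchanged, and alters exactly three terms on the right. -/
theorem middle_indep {f : ℝ → ℝ → ℝ → ℝ} {g : (ℤ → ℝ) → ℝ} {p q : ℤ}
    (hg : ∀ u v : ℤ → ℝ, (∀ j, q ≤ j → j ≤ p → u j = v j) → g u = g v)
    (h : ∀ u : ℤ → ℝ, g (shift 2 u) - g u = f (u 4) (u 3) (u 2) - f (u 1) (u 0) (u (-1)))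
    (a b y c d : ℝ) : f a b y - f b y c + f y c d = f a b 0 - f b 0 c + f 0 c d := by
  -- The varied index is `m = 2i + 4`: it satisfies `p < m < q + 2N`.
  set i : ℕ := p.natAbs with hi
  set N : ℕ := i + q.natAbs + 3 with hN
  let m : ℤ := 2 * i + 4
  let u : ℝ → ℤ → ℝ := fun t j =>
    if j = m then t else if j = m + 2 then a else if j = m + 1 then b
    else if j = m - 1 then c else if j = m - 2 then d else 0
  have hu : ∀ t j, j ≠ m → u t j = u 0 j := fun t j hj => by simp [u, hj]
  have um : ∀ t, u t m = t := fun t => by simp [u]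
  have ua : ∀ t, u t (m + 2) = a := fun t => by simp [u]
  have ub : ∀ t, u t (m + 1) = b := fun t => by simp [u]
  have uc : ∀ t, u t (m - 1) = c := fun t => by
    simp only [u]; split_ifs <;> first | rfl | omega
  have ud : ∀ t, u t (m - 2) = d := fun t => by
    simp only [u]; split_ifs <;> first | rfl | omega
  have e1 : g (u y) = g (u 0) := hg _ _ fun j _ hj => hu _ _ (by omega)
  have e2 : g (shift (2 * N) (u y)) = g (shift (2 * N) (u 0)) :=
    hg _ _ fun j hj _ => hu _ _ (by omega)
  have T1 := telescope h (u y) N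
  have T0 := telescope h (u 0) N
  rw [e1, e2, T0] at T1
  let F : ℝ → ℤ → ℝ := fun t n => f (u t (n + 1)) (u t n) (u t (n - 1))
  have hF : ∀ n, n ≠ m - 1 → n ≠ m → n ≠ m + 1 → F y n = F 0 n := fun n h1 h2 h3 => by
    simp only [F]
    rw [hu y _ (by omega), hu y _ h2, hu y (n - 1) (by omega)]
  have T : ∑ k ∈ range N, ((F y (2 * k + 3) - F 0 (2 * k + 3)) - (F y (2 * k) - F 0 (2 * k)))
      = 0 := by
    have : ∀ t, ∑ k ∈ range N, (F t (2 * k + 3) - F t (2 * k)) = ∑ k ∈ range N,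
      (f (u t (2 * k + 4)) (u t (2 * k + 3)) (u t (2 * k + 2))
        - f (u t (2 * k + 1)) (u t (2 * k)) (u t (2 * k - 1))) := fun t =>
      sum_congr rfl fun k _ => by
        simp only [F]
        rw [show (2 * (k : ℤ) + 3 + 1) = 2 * k + 4 by ring,
          show (2 * (k : ℤ) + 3 - 1) = 2 * k + 2 by ring]
    rw [← this, ← this, ← sub_eq_zero, ← sum_sub_distrib] at T1
    refine Eq.trans ?_ (neg_eq_zero.2 T1)
    rw [← sum_neg_distrib]
    exact sum_congr rfl fun k _ => by ring
  -- `m - 1 = 2i + 3` and `m + 1 = 2(i + 1) + 3` are met by the odd indices, `m = 2(i + 2)` by the even.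
  have S : ∀ k ∈ range N,
      ((F y (2 * k + 3) - F 0 (2 * k + 3)) - (F y (2 * k) - F 0 (2 * k)))
      = (if k = i then F y (m - 1) - F 0 (m - 1) else 0)
        + (if k = i + 1 then F y (m + 1) - F 0 (m + 1) else 0)
        - (if k = i + 2 then F y m - F 0 m else 0) := fun k _ => by
    have hodd : F y (2 * k + 3) - F 0 (2 * k + 3)
        = (if k = i then F y (m - 1) - F 0 (m - 1) else 0)
        + (if k = i + 1 then F y (m + 1) - F 0 (m + 1) else 0) := by
      by_cases h1 : k = i
      · rw [if_pos h1, if_neg (by omega), add_zero, show 2 * (k : ℤ) + 3 = m - 1 by omega]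
      by_cases h2 : k = i + 1
      · rw [if_neg h1, if_pos h2, zero_add, show 2 * (k : ℤ) + 3 = m + 1 by omega]
      · rw [if_neg h1, if_neg h2, hF _ (by omega) (by omega) (by omega)]
        ring
    have heven : F y (2 * k) - F 0 (2 * k) = if k = i + 2 then F y m - F 0 m else 0 := by
      by_cases h1 : k = i + 2
      · rw [if_pos h1, show 2 * (k : ℤ) = m by omega]
      · rw [if_neg h1, hF _ (by omega) (by omega) (by omega), sub_self]
    rw [hodd, heven]
  rw [sum_congr rfl S, sum_sub_distrib, sum_add_distrib, sum_ite_eq', sum_ite_eq', sum_ite_eq',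
    if_pos (by simp; omega), if_pos (by simp; omega), if_pos (by simp; omega)] at T
  have f1 : ∀ t, F t (m - 1) = f t c d := fun t => by
    simp only [F]
    rw [sub_add_cancel, um, uc, show m - 1 - 1 = m - 2 by ring, ud]
  have f2 : ∀ t, F t m = f b t c := fun t => by simp only [F]; rw [ub, um, uc]
  have f3 : ∀ t, F t (m + 1) = f a b t := fun t => by
    simp only [F]
    rw [show m + 1 + 1 = m + 2 by ring, ua, ub, add_sub_cancel_right, um]
  simp only [f1, f2, f3] at T
  linarith

/-- Lemma 1: if `A` is smooth and positive and `H` is a smooth,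
not identically zero, lattice function such that `a_3 h_0 = a_0 h_2` holds
identically (`a_n = A(u_{n+1},u_n,u_{n-1})`, `h_n = T^n H`), then
`A(x,y,z) = α(x,y)·α(y,z)` for some function `α`. -/
theorem lemma1_factorization
    (A : ℝ → ℝ → ℝ → ℝ)
    (hA : ContDiff ℝ (⊤ : ℕ∞) fun p : ℝ × ℝ × ℝ => A p.1 p.2.1 p.2.2)
    (hApos : ∀ x y z : ℝ, 0 < A x y z)
    (p q : ℤ) (hpq : q ≤ p)
    (H : (ℤ → ℝ) → ℝ) (hH : SmoothWindow q p H)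
    (hHne : ∃ u : ℤ → ℝ, H u ≠ 0)
    (hid : ∀ u : ℤ → ℝ,
      A (u 4) (u 3) (u 2) * H u = A (u 1) (u 0) (u (-1)) * H (shift 2 u)) :
    ∃ α : ℝ → ℝ → ℝ, ∀ x y z : ℝ, A x y z = α x y * α y z := by
  have hne := H_ne_zero hApos hpq hH hHne hid
  -- `H` may be negative: `Real.log (H u)` is `log |H u|`.
  have K := middle_indep (f := fun x y z => Real.log (A x y z)) (g := fun u => Real.log (H u))
    (p := p) (q := q) (fun u v h => by simp only [hH.congr hpq h])
    (fun u => by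
      have := congrArg Real.log (hid u)
      rw [Real.log_mul (hApos _ _ _).ne' (hne _), Real.log_mul (hApos _ _ _).ne' (hne _)] at this
      linarith)
  refine ⟨fun x y => Real.exp (Real.log (A x y 0) + Real.log (A 0 0 y) - Real.log (A 0 y 0)
    - Real.log (A 0 0 0) / 2), fun x y z => ?_⟩
  rw [← Real.exp_add, ← additive_split (fun x y z => Real.log (A x y z)) K x y z,
    Real.exp_log (hApos _ _ _)]
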